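/- Recovery of the Brown-Henneaux central charges by a change of basis: Let 𝔤 be a Lie algebra over ℂ, let λ be a nonzero complex number (physically λ = l/(8G)), and let L_m, P_m (m ∈ ℤ), Q, C be elements of 𝔤 with C central (i.e. [x,C] = 0 for all x ∈ 𝔤), satisfying for all m, n ∈ ℤ: i[L_m,L_n] = (m−n)L_{m+n}; i[L_m,P_n] = −n·P_{m+n} + i·λ·m²·δ_{m+n,0}·C; i[P_m,P_n] = −λ·m·δ_{m+n,0}·C; i[L_m,Q] = (i/2)P_m; i[P_m,Q] = −i·(λ/2)·δ_{m,0}·C. Define L̃_m := L_m + i·m·P_m. Then for all m, n ∈ ℤ: i[L̃_m,L̃_n] = (m−n)·L̃_{m+n} + λ·m³·δ_{m+n,0}·C (a Virasoro algebra with central charge c = 12λ = 3l/(2G)); i[L̃_m,P_n] = −n·P_{m+n}; and i[L̃_m,Q] = (i/2)P_m. -/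

import Mathlib

/-- Recovery of the Brown-Henneaux central charges by a change of basis: in a
complex Lie algebra `𝔤` with elements `L m`, `P m`, `Q` and a central element `C`
satisfying the commutation relations of one chiral half of the centrally extended
asymptotic symmetry algebra (with `lam = l/(8G)`), the redefined generators
`Lt m = L m + i m • P m` form a Virasoro algebra with central charge `c = 12 lam`,
acting on the currents without central terms. -/
theorem stmt_1 {𝔤 : Type*} [LieRing 𝔤] [LieAlgebra ℂ 𝔤]
    (lam : ℂ) (hlam : lam ≠ 0)
    (L P : ℤ → 𝔤) (Q C : 𝔤)
    (hC : ∀ x : 𝔤, ⁅x, C⁆ = 0)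
    (hLL : ∀ m n : ℤ, Complex.I • ⁅L m, L n⁆ = ((m : ℂ) - n) • L (m + n))
    (hLP : ∀ m n : ℤ, Complex.I • ⁅L m, P n⁆ =
      (-(n : ℂ)) • P (m + n)
        + (Complex.I * lam * (m : ℂ) ^ 2 * (if m + n = 0 then 1 else 0)) • C)
    (hPP : ∀ m n : ℤ, Complex.I • ⁅P m, P n⁆ =
      (-(lam * (m : ℂ)) * (if m + n = 0 then 1 else 0)) • C)
    (hLQ : ∀ m : ℤ, Complex.I • ⁅L m, Q⁆ = (Complex.I / 2) • P m)
    (hPQ : ∀ m : ℤ, Complex.I • ⁅P m, Q⁆ =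
      (-(Complex.I * (lam / 2)) * (if m = 0 then 1 else 0)) • C)
    (Lt : ℤ → 𝔤) (hLt : ∀ m : ℤ, Lt m = L m + (Complex.I * (m : ℂ)) • P m) :
    ∀ m n : ℤ,
      (Complex.I • ⁅Lt m, Lt n⁆ =
        ((m : ℂ) - n) • Lt (m + n)
          + (lam * (m : ℂ) ^ 3 * (if m + n = 0 then 1 else 0)) • C) ∧
      (Complex.I • ⁅Lt m, P n⁆ = (-(n : ℂ)) • P (m + n)) ∧
      (Complex.I • ⁅Lt m, Q⁆ = (Complex.I / 2) • P m) := by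
  intro m n
  have hP : ∀ m n : ℤ, Complex.I • ⁅Lt m, P n⁆ = (-(n : ℂ)) • P (m + n) := by
    intro m n
    rw [hLt, add_lie, smul_lie, smul_add, smul_comm Complex.I (Complex.I * (m : ℂ)), hLP, hPP]
    module
  have hPL : Complex.I • ⁅P m, L n⁆ = (m : ℂ) • P (m + n)
      - (Complex.I * lam * (n : ℂ) ^ 2 * (if m + n = 0 then 1 else 0)) • C := by
    rw [← lie_skew, smul_neg, hLP, add_comm n m]
    module
  refine ⟨?_, hP m n, ?_⟩
  · have h1 : Complex.I • ⁅Lt m, Lt n⁆ = Complex.I • ⁅Lt m, L n⁆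
        + (Complex.I * (n : ℂ)) • (Complex.I • ⁅Lt m, P n⁆) := by
      rw [hLt n, lie_add, lie_smul, smul_add, smul_comm Complex.I (Complex.I * (n : ℂ))]
    have h2 : Complex.I • ⁅Lt m, L n⁆ = Complex.I • ⁅L m, L n⁆
        + (Complex.I * (m : ℂ)) • (Complex.I • ⁅P m, L n⁆) := by
      rw [hLt m, add_lie, smul_lie, smul_add, smul_comm Complex.I (Complex.I * (m : ℂ))]
    rw [h1, h2, hP, hLL, hPL, hLt]
    have hI : Complex.I * Complex.I = -1 := Complex.I_mul_I
    have hc : -(Complex.I * (m : ℂ)) * (Complex.I * lam * (n : ℂ) ^ 2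
        * (if m + n = 0 then 1 else 0)) = lam * (m : ℂ) ^ 3 * (if m + n = 0 then 1 else 0) := by
      by_cases h : m + n = 0
      · have hn : (n : ℂ) = -(m : ℂ) := by
          have : n = -m := by omega
          rw [this]; push_cast; rfl
        rw [if_pos h, hn]
        linear_combination (-(lam * (m : ℂ) ^ 3)) * hI
      · simp [h]
    rw [← hc]
    push_cast
    module
  · rw [hLt, add_lie, smul_lie, smul_add, smul_comm Complex.I (Complex.I * (m : ℂ)), hLQ, hPQ]
    by_cases h : m = 0
    · simp [h]
    · simp [h]
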